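/- There exists a constant c₀ > 0 such that for each 0 < δ ≤ 1/2 there exists a smooth function χ_δ : [0, ∞) → ℝ with: (i) χ_δ(t) = t for t near 0, χ_δ(t) = 0 for t ≥ √δ, and 0 ≤ χ_δ(t) ≤ δ/2 for all t; (ii) |χ_δ'(t)| ≤ c₀ for all t; (iii) −2/δ ≤ χ_δ''(t) ≤ 0 for all t ∈ [0, δ] and |χ_δ''(t)| ≤ c₀ for all t ∈ [δ, √δ]. -/

import Mathlib

/-- A smooth function all of whose data is controlled by an explicit derivative. -/
lemma contDiff_of_hasDerivAt_aux {f g : ℝ → ℝ} (h : ∀ x, HasDerivAt f (g x) x)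
    (hg : ContDiff ℝ (⊤ : ℕ∞) g) : ContDiff ℝ (⊤ : ℕ∞) f := by
  rw [contDiff_infty_iff_deriv]
  refine ⟨fun x => (h x).differentiableAt, ?_⟩
  have : deriv f = g := funext fun x => (h x).deriv
  rw [this]; exact hg

/-- The even density, with height at most two. -/
lemma exists_density_aux : ∃ φ : ℝ → ℝ, ContDiff ℝ (⊤ : ℕ∞) φ ∧ (∀ x, 0 ≤ φ x) ∧
    (∀ x, φ x ≤ 2) ∧ (∀ x, φ (-x) = φ x) ∧ (∀ x, 3/8 ≤ |x| → φ x = 0) ∧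
    ∫ x, φ x = 1 := by
  let b : ContDiffBump (0:ℝ) := ⟨1/4, 3/8, by norm_num, by norm_num⟩
  refine ⟨b.normed MeasureTheory.volume, b.contDiff_normed, fun x => b.nonneg_normed x, ?_,
    fun x => b.normed_neg x, ?_, b.integral_normed⟩
  · intro x
    have h := b.normed_le_div_measure_closedBall_rIn (μ := MeasureTheory.volume) x
    have h2 : (MeasureTheory.volume.real (Metric.closedBall (0:ℝ) b.rIn)) = 1/2 := by
      change (MeasureTheory.volume.real (Metric.closedBall (0:ℝ) (1/4))) = 1/2
      rw [Real.volume_real_closedBall (by norm_num)]; norm_num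
    rw [h2] at h
    norm_num at h
    exact h
  · intro x hx
    by_contra hne
    have : x ∈ Function.support (b.normed MeasureTheory.volume) := hne
    rw [b.support_normed_eq] at this
    rw [Metric.mem_ball, Real.dist_eq, sub_zero] at this
    change |x| < 3/8 at this
    linarith

lemma exists_profile_aux : ∃ f f1 f2 : ℝ → ℝ, (∀ x, HasDerivAt f (f1 x) x) ∧
    (∀ x, HasDerivAt f1 (f2 x) x) ∧ ContDiff ℝ (⊤ : ℕ∞) f ∧
    (∀ x, -2 ≤ f2 x ∧ f2 x ≤ 0) ∧ (∀ x, 0 ≤ f1 x ∧ f1 x ≤ 1) ∧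
    (∀ x, 0 ≤ x → 0 ≤ f x ∧ f x ≤ 1/2) ∧
    (∀ x, 1 ≤ x → f1 x = 0 ∧ f2 x = 0) ∧ (∀ x, 0 ≤ x → x ≤ 1/8 → f x = x) := by
  obtain ⟨φ, hφ, h0, h2, hev, hz, hint⟩ := exists_density_aux
  have hc : Continuous φ := hφ.continuous
  let G : ℝ → ℝ := fun x => ∫ y in (0:ℝ)..x, φ y
  have hG : ∀ x, HasDerivAt G (φ x) x := fun x =>
    intervalIntegral.integral_hasDerivAt_right (hc.intervalIntegrable _ _)
      (hc.stronglyMeasurableAtFilter _ _) hc.continuousAt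
  have hGs := contDiff_of_hasDerivAt_aux hG hφ
  have hGc : Continuous G := hGs.continuous
  let H : ℝ → ℝ := fun x => ∫ y in (0:ℝ)..x, G y
  have hH : ∀ x, HasDerivAt H (G x) x := fun x =>
    intervalIntegral.integral_hasDerivAt_right (hGc.intervalIntegrable _ _)
      (hGc.stronglyMeasurableAtFilter _ _) hGc.continuousAt
  have hHs := contDiff_of_hasDerivAt_aux hH hGs
  have hGodd : ∀ x, G (-x) = - G x := by
    intro x
    have := intervalIntegral.integral_comp_neg (a := 0) (b := x) φ
    simp only [hev, neg_zero] at this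
    change (∫ y in (0:ℝ)..(-x), φ y) = - ∫ y in (0:ℝ)..x, φ y
    rw [this, intervalIntegral.integral_symm]
  have hHev : ∀ x, H (-x) = H x := by
    intro x
    have := intervalIntegral.integral_comp_neg (a := 0) (b := x) G
    simp only [hGodd, neg_zero, intervalIntegral.integral_neg] at this
    change (∫ y in (0:ℝ)..(-x), G y) = ∫ y in (0:ℝ)..x, G y
    rw [intervalIntegral.integral_symm, ← this, neg_neg]
  have hGmono : Monotone G := monotone_of_deriv_nonneg (fun x => (hG x).differentiableAt)
    (fun x => by rw [(hG x).deriv]; exact h0 x)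
  have hGhalf : ∀ x, 3/8 ≤ x → G x = 1/2 := by
    intro x hx
    have hsupp : Function.support φ ⊆ Set.Ioc (-x) x := by
      intro y hy
      by_contra hny
      apply hy
      apply hz
      by_contra hlt
      push Not at hlt
      rw [abs_lt] at hlt
      exact hny ⟨by linarith, by linarith⟩
    have e1 := intervalIntegral.integral_eq_integral_of_support_subset
      (μ := MeasureTheory.volume) hsupp
    have e2 := intervalIntegral.integral_add_adjacent_intervals
      (hc.intervalIntegrable (μ := MeasureTheory.volume) (-x) 0) (hc.intervalIntegrable 0 x)
    have e3 := intervalIntegral.integral_symm (μ := MeasureTheory.volume) (f := φ) 0 (-x)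
    have e4 : (∫ y in (0:ℝ)..(-x), φ y) = - ∫ y in (0:ℝ)..x, φ y := hGodd x
    change (∫ y in (0:ℝ)..x, φ y) = 1/2
    linarith
  have hGneg : ∀ x, x ≤ -(3/8) → G x = -(1/2) := by
    intro x hx
    have := hGodd (-x)
    rw [neg_neg, hGhalf (-x) (by linarith)] at this
    exact this
  have hGle : ∀ x, G x ≤ 1/2 := fun x => by
    rw [← hGhalf (max x (3/8)) (le_max_right _ _)]; exact hGmono (le_max_left _ _)
  have hGge : ∀ x, -(1/2) ≤ G x := fun x => by
    have := hGle (-x); rw [hGodd] at this; linarith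
  let f : ℝ → ℝ := fun s => s/2 - H (s - 1/2) + H (1/2)
  let f1 : ℝ → ℝ := fun s => 1/2 - G (s - 1/2)
  let f2 : ℝ → ℝ := fun s => - φ (s - 1/2)
  have hf : ∀ x, HasDerivAt f (f1 x) x := fun x =>
    (((hasDerivAt_id x).div_const 2).sub ((hH (x - 1/2)).comp_sub_const x (1/2))).add_const _
  have hf1 : ∀ x, HasDerivAt f1 (f2 x) x := fun x =>
    ((hG (x - 1/2)).comp_sub_const x (1/2)).const_sub _
  have hfs : ContDiff ℝ (⊤ : ℕ∞) f := by
    have := hHs.comp (contDiff_id.sub (contDiff_const (c := (1/2:ℝ))))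
    exact ((contDiff_id.div_const 2).sub this).add contDiff_const
  have hb1 : ∀ x, 0 ≤ f1 x ∧ f1 x ≤ 1 := fun x =>
    ⟨by have := hGle (x - 1/2); change 0 ≤ 1/2 - G (x - 1/2); linarith,
     by have := hGge (x - 1/2); change 1/2 - G (x - 1/2) ≤ 1; linarith⟩
  have hmono : Monotone f := monotone_of_deriv_nonneg (fun x => (hf x).differentiableAt)
    (fun x => by rw [(hf x).deriv]; exact (hb1 x).1)
  have hf0 : f 0 = 0 := by
    change (0:ℝ)/2 - H (0 - 1/2) + H (1/2) = 0
    rw [zero_sub, hHev]; ring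
  have hfone : f 1 = 1/2 := by
    change (1:ℝ)/2 - H (1 - 1/2) + H (1/2) = 1/2
    norm_num
  have hz1 : ∀ x, 1 ≤ x → f1 x = 0 ∧ f2 x = 0 := fun x hx =>
    ⟨by change 1/2 - G (x - 1/2) = 0
        rw [hGhalf _ (by linarith)]; ring,
     by change - φ (x - 1/2) = 0
        rw [hz _ (by rw [abs_of_nonneg] <;> linarith)]; ring⟩
  have hconst : ∀ x, 1 ≤ x → f x = 1/2 := by
    intro x hx
    rw [← hfone]
    refine constant_of_has_deriv_right_zero (a := 1) (b := x) hfs.continuous.continuousOn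
      (fun y hy => ?_) x ⟨hx, le_rfl⟩
    have := (hf y).hasDerivWithinAt (s := Set.Ici y)
    rwa [(hz1 y hy.1).1] at this
  refine ⟨f, f1, f2, hf, hf1, hfs, fun x => ⟨neg_le_neg (h2 _), neg_nonpos.2 (h0 _)⟩, hb1,
    fun x hx => ⟨by rw [← hf0]; exact hmono hx, ?_⟩, hz1, ?_⟩
  · rw [← hconst (max x 1) (le_max_right _ _)]; exact hmono (le_max_left _ _)
  · intro x hx hx'
    have key : f x - x = f 0 - 0 := by
      refine constant_of_has_deriv_right_zero (f := fun y => f y - y) (a := 0) (b := x)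
        (hfs.continuous.sub continuous_id).continuousOn (fun y hy => ?_) x ⟨hx, le_rfl⟩
      have h := ((hf y).sub (hasDerivAt_id y)).hasDerivWithinAt (s := Set.Ici y)
      have e : f1 y - 1 = 0 := by
        change 1/2 - G (y - 1/2) - 1 = 0
        rw [hGneg _ (by linarith [hy.2])]; ring
      rw [e] at h
      exact h
    rw [hf0] at key; linarith

lemma exists_cutoff_aux : ∃ η η1 η2 : ℝ → ℝ, ∃ A B : ℝ, (∀ x, HasDerivAt η (η1 x) x) ∧
    (∀ x, HasDerivAt η1 (η2 x) x) ∧ ContDiff ℝ (⊤ : ℕ∞) η ∧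
    (∀ x, 0 ≤ η x ∧ η x ≤ 1) ∧ (∀ x, |η1 x| ≤ A) ∧ (∀ x, |η2 x| ≤ B) ∧
    (∀ x, 0 ≤ x → x < 3/4 → η x = 1 ∧ η1 x = 0 ∧ η2 x = 0) ∧ (∀ x, 1 ≤ x → η x = 0) := by
  let b : ContDiffBump (0:ℝ) := ⟨3/4, 1, by norm_num, by norm_num⟩
  have hb : ContDiff ℝ (⊤ : ℕ∞) b := b.contDiff
  have hb1 : ContDiff ℝ (⊤ : ℕ∞) (deriv b) := (contDiff_infty_iff_deriv.1 hb).2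
  have hb2 : ContDiff ℝ (⊤ : ℕ∞) (deriv (deriv b)) := (contDiff_infty_iff_deriv.1 hb1).2
  obtain ⟨A, hA⟩ := b.hasCompactSupport.deriv.exists_bound_of_continuous hb1.continuous
  obtain ⟨B, hB⟩ := b.hasCompactSupport.deriv.deriv.exists_bound_of_continuous hb2.continuous
  refine ⟨b, deriv b, deriv (deriv b), A, B,
    fun x => ((contDiff_infty_iff_deriv.1 hb).1 x).hasDerivAt,
    fun x => ((contDiff_infty_iff_deriv.1 hb1).1 x).hasDerivAt, hb,
    fun x => ⟨b.nonneg, b.le_one⟩, hA, hB, ?_, ?_⟩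
  · intro x hx hx'
    have hmem : x ∈ Metric.ball (0:ℝ) b.rIn := by
      rw [Metric.mem_ball, Real.dist_eq, sub_zero, abs_of_nonneg hx]; exact hx'
    have e0 : (b : ℝ → ℝ) =ᶠ[nhds x] fun _ => 1 := by
      filter_upwards [Metric.isOpen_ball.mem_nhds hmem] with y hy
      exact b.one_of_mem_closedBall (Metric.ball_subset_closedBall hy)
    have e1 := e0.deriv
    have e2 := e1.deriv
    refine ⟨e0.eq_of_nhds, ?_, ?_⟩
    · rw [e1.eq_of_nhds]; simp
    · rw [e2.eq_of_nhds]; simp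
  · intro x hx
    apply b.zero_of_le_dist
    rw [Real.dist_eq, sub_zero]
    exact hx.trans (le_abs_self x)

/-- Existence of the bump functions `χ_δ` (Bär–Hanke): there is a uniform constant
`c₀ > 0` such that for every `0 < δ ≤ 1/2` there is a smooth function `χ_δ` (modelled
as a smooth function on `ℝ`, i.e. extendable beyond `[0, ∞)`) with `χ_δ(t) = t` near
`0`, `χ_δ(t) = 0` for `t ≥ √δ`, `0 ≤ χ_δ ≤ δ/2`, `|χ_δ'| ≤ c₀`,
`-2/δ ≤ χ_δ'' ≤ 0` on `[0, δ]` and `|χ_δ''| ≤ c₀` on `[δ, √δ]`. -/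
theorem exists_bump_chi :
    ∃ c₀ : ℝ, 0 < c₀ ∧ ∀ δ : ℝ, 0 < δ → δ ≤ 1/2 →
      ∃ χ : ℝ → ℝ, ContDiff ℝ (⊤ : ℕ∞) χ ∧
        (∃ ε > (0:ℝ), ∀ t ∈ Set.Ico (0:ℝ) ε, χ t = t) ∧
        (∀ t, Real.sqrt δ ≤ t → χ t = 0) ∧
        (∀ t, 0 ≤ t → 0 ≤ χ t ∧ χ t ≤ δ/2) ∧
        (∀ t, 0 ≤ t → |deriv χ t| ≤ c₀) ∧
        (∀ t ∈ Set.Icc (0:ℝ) δ, -(2/δ) ≤ deriv (deriv χ) t ∧ deriv (deriv χ) t ≤ 0) ∧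
        (∀ t ∈ Set.Icc δ (Real.sqrt δ), |deriv (deriv χ) t| ≤ c₀) := by
  obtain ⟨f, f1, f2, hf, hf1, hfs, hf2b, hf1b, hfb, hfz, hfid⟩ := exists_profile_aux
  obtain ⟨η, η1, η2, A, B, hη, hη1, hηs, hηb, hA, hB, hηone, hηz⟩ := exists_cutoff_aux
  have hA0 : 0 ≤ A := (abs_nonneg _).trans (hA 0)
  have hB0 : 0 ≤ B := (abs_nonneg _).trans (hB 0)
  refine ⟨1 + A + B, by linarith, fun δ hδ hδ2 => ?_⟩
  set r := Real.sqrt δ with hr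
  have hr0 : 0 < r := Real.sqrt_pos.2 hδ
  have hrr : r * r = δ := Real.mul_self_sqrt hδ.le
  have hr34 : r < 3/4 := by nlinarith
  have hl : ∀ (c t : ℝ), HasDerivAt (fun t => t / c) (1 / c) t :=
    fun c t => (hasDerivAt_id t).div_const c
  have hcomp : ∀ {g g' : ℝ → ℝ} (c : ℝ), (∀ x, HasDerivAt g (g' x) x) → ∀ t,
      HasDerivAt (fun t => g (t / c)) (g' (t / c) * (1 / c)) t :=
    fun c h t => (h (t / c)).comp t (hl c t)
  let χ : ℝ → ℝ := fun t => δ * f (t / δ) * η (t / r)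
  let χ1 : ℝ → ℝ := fun t => f1 (t / δ) * η (t / r) + r * f (t / δ) * η1 (t / r)
  let χ2 : ℝ → ℝ := fun t => f2 (t / δ) * η (t / r) / δ +
    2 / r * (f1 (t / δ) * η1 (t / r)) + f (t / δ) * η2 (t / r)
  have hχ : ∀ t, HasDerivAt χ (χ1 t) t := by
    intro t
    have h := ((hcomp δ hf t).const_mul δ).mul (hcomp r hη t)
    refine h.congr_deriv ?_
    simp only [χ1]
    rw [← hrr]
    field_simp
  have hχ1 : ∀ t, HasDerivAt χ1 (χ2 t) t := by
    intro t
    have h := ((hcomp δ hf1 t).mul (hcomp r hη t)).add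
      (((hcomp δ hf t).const_mul r).mul (hcomp r hη1 t))
    refine h.congr_deriv ?_
    simp only [χ2]
    rw [← hrr]
    field_simp
    ring
  have d1 : deriv χ = χ1 := funext fun t => (hχ t).deriv
  have d2 : deriv (deriv χ) = χ2 := by rw [d1]; exact funext fun t => (hχ1 t).deriv
  have small : ∀ t, 0 ≤ t → t ≤ δ → 0 ≤ t / r ∧ t / r < 3/4 := by
    intro t h0 h1
    refine ⟨by positivity, ?_⟩
    rw [div_lt_iff₀ hr0]
    nlinarith
  refine ⟨χ, ?_, ⟨δ / 8, by positivity, ?_⟩, ?_, ?_, ?_, ?_, ?_⟩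
  · exact (contDiff_const.mul (hfs.comp (contDiff_id.div_const δ))).mul
      (hηs.comp (contDiff_id.div_const r))
  · rintro t ⟨h0, h1⟩
    have hs := small t h0 (by linarith)
    simp only [χ]
    rw [(hηone _ hs.1 hs.2).1, hfid (t / δ) (by positivity)
      (by rw [div_le_iff₀ hδ]; linarith)]
    field_simp
  · intro t ht
    simp only [χ]
    rw [hηz _ ((one_le_div hr0).2 ht), mul_zero]
  · intro t ht
    have a := hfb (t / δ) (by positivity)
    have b := hηb (t / r)
    have p : 0 ≤ δ * f (t / δ) := mul_nonneg hδ.le a.1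
    refine ⟨mul_nonneg p b.1, ?_⟩
    calc δ * f (t / δ) * η (t / r) ≤ δ * f (t / δ) := mul_le_of_le_one_right p b.2
      _ ≤ δ / 2 := by nlinarith [a.2]
  · intro t ht
    rw [d1]
    have a := hfb (t / δ) (by positivity)
    have b := hηb (t / r)
    have c := hf1b (t / δ)
    have e1 : |f1 (t / δ) * η (t / r)| ≤ 1 := by
      rw [abs_of_nonneg (mul_nonneg c.1 b.1)]
      exact mul_le_one₀ c.2 b.1 b.2
    have e2 : |r * f (t / δ) * η1 (t / r)| ≤ A := by
      rw [abs_mul, abs_of_nonneg (mul_nonneg hr0.le a.1)]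
      have : r * f (t / δ) ≤ 1 := mul_le_one₀ (by linarith) a.1 (by linarith)
      calc _ ≤ 1 * |η1 (t / r)| := mul_le_mul_of_nonneg_right this (abs_nonneg _)
        _ ≤ A := by rw [one_mul]; exact hA _
    have := abs_add_le (f1 (t / δ) * η (t / r)) (r * f (t / δ) * η1 (t / r))
    simp only [χ1]
    linarith
  · rintro t ⟨h0, h1⟩
    have hs := small t h0 h1
    obtain ⟨o1, o2, o3⟩ := hηone _ hs.1 hs.2
    have q := hf2b (t / δ)
    rw [d2]
    simp only [χ2]
    rw [o1, o2, o3]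
    simp only [mul_zero, add_zero, mul_one]
    refine ⟨?_, div_nonpos_of_nonpos_of_nonneg q.2 hδ.le⟩
    rw [← neg_div]
    exact div_le_div_of_nonneg_right q.1 hδ.le
  · rintro t ⟨h0, h1⟩
    obtain ⟨z1, z2⟩ := hfz (t / δ) ((one_le_div hδ).2 h0)
    have a := hfb (t / δ) (div_nonneg (by linarith) hδ.le)
    rw [d2]
    simp only [χ2]
    rw [z1, z2]
    simp only [zero_mul, mul_zero, zero_div, zero_add]
    rw [abs_mul, abs_of_nonneg a.1]
    have h := hB (t / r)
    nlinarith [abs_nonneg (η2 (t / r))]
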